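/- arXiv:1402.1675 — 2 statements merged into one kernel-verified Lean document; each statement's English description precedes it below -/
import Mathlib

section
/- Let K be any field, and let G_14 ⊆ S_8 be the subgroup of order 24 generated by σ_2 = (1,3)(2,4)(5,7)(6,8), φ̃_1 = (2,3,4)(6,7,8), and κ° = (1,6)(2,5)(3,7)(4,8). Then the fixed field K(x_1,…,x_8)^{G_14} is K-rational. -/
noncomputable section

/-- The rational function field `K(x_i : i ∈ I)` over `K`, realized as the fraction field
of the multivariate polynomial ring. -/
abbrev RFF (K : Type) [Field K] (I : Type) := FractionRing (MvPolynomial I K)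

/-- The image of the variable `x_i` in the rational function field `K(x_i : i ∈ I)`. -/
noncomputable def Xvar (K : Type) [Field K] (I : Type) (i : I) : RFF K I :=
  algebraMap (MvPolynomial I K) (RFF K I) (MvPolynomial.X i)

/-- Permutations of the variables as `K`-algebra automorphisms of the polynomial ring. -/
def renameHom (K : Type) [Field K] (I : Type) :
    Equiv.Perm I →* (MvPolynomial I K ≃ₐ[K] MvPolynomial I K) where
  toFun σ := MvPolynomial.renameEquiv K σ
  map_one' := MvPolynomial.renameEquiv_refl K
  map_mul' σ τ := (MvPolynomial.renameEquiv_trans K τ σ).symm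

/-- The action of permutations of the variables on `K(x_i : i ∈ I)` by `K`-automorphisms,
determined by `σ(x_i) = x_{σ(i)}`. -/
noncomputable def permHom (K : Type) [Field K] (I : Type) :
    Equiv.Perm I →* (RFF K I ≃ₐ[K] RFF K I) :=
  (IsFractionRing.fieldEquivOfAlgEquivHom K (RFF K I)).comp (renameHom K I)

/-- The fixed field `K(x_i : i ∈ I)^G` of a group `G` of permutations of the variables. -/
noncomputable def fixedSub (K : Type) [Field K] (I : Type) (G : Subgroup (Equiv.Perm I)) :
    IntermediateField K (RFF K I) :=
  IntermediateField.fixedField (G.map (permHom K I))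

/-- An extension `L/K` is `K`-rational if it is purely transcendental over `K`, i.e. generated
by finitely many algebraically independent elements. -/
def IsRatExt (K : Type) [Field K] (L : Type*) [Field L] [Algebra K L] : Prop :=
  ∃ (n : ℕ) (t : Fin n → L), AlgebraicIndependent K t ∧
    IntermediateField.adjoin K (Set.range t) = ⊤

/-- The sum of the `A₄`-orbit of the monomial `b c² d³`. -/
def th {R : Type*} [CommRing R] (a b c d : R) : R :=
  b*c^2*d^3 + c*d^2*b^3 + d*b^2*c^3 + a*d^2*c^3 + c*a^2*d^3 + d*c^2*a^3 + a*b^2*d^3 + b*d^2*a^3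
    + d*a^2*b^3 + a*c^2*b^3 + b*a^2*c^3 + c*b^2*a^3

lemma th_sub {R : Type*} [CommRing R] (a b c d : R) :
    th a b c d - th b a c d = (b-a)*(c-a)*(d-a)*(c-b)*(d-b)*(d-c) := by
  unfold th; ring

/-- The twisted power sums. -/
def zz {R : Type*} [CommRing R] (x y : Fin 4 → R) (j : ℕ) : R :=
  let a := fun i => x i + y i
  ∑ i, a i ^ j * (th (a 0) (a 1) (a 2) (a 3) * x i + th (a 1) (a 0) (a 2) (a 3) * y i)

/-- The eight generators. -/
def gens {R : Type*} [CommRing R] (x y : Fin 4 → R) : Fin 8 → R :=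
  let a := fun i => x i + y i
  ![a 0 + a 1 + a 2 + a 3,
    a 0 * a 1 + a 0 * a 2 + a 0 * a 3 + a 1 * a 2 + a 1 * a 3 + a 2 * a 3,
    a 0 * a 1 * a 2 + a 0 * a 1 * a 3 + a 0 * a 2 * a 3 + a 1 * a 2 * a 3,
    a 0 * a 1 * a 2 * a 3, zz x y 0, zz x y 1, zz x y 2, zz x y 3]

lemma th_rot {R : Type*} [CommRing R] (a b c d : R) : th a c d b = th a b c d := by
  unfold th; ring

lemma th_dbl {R : Type*} [CommRing R] (a b c d : R) : th c d a b = th a b c d := by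
  unfold th; ring

lemma zz_eq {R : Type*} [CommRing R] (x y : Fin 4 → R) (j : ℕ) : zz x y j =
    (x 0 + y 0)^j * (th (x 0 + y 0) (x 1 + y 1) (x 2 + y 2) (x 3 + y 3) * x 0
      + th (x 1 + y 1) (x 0 + y 0) (x 2 + y 2) (x 3 + y 3) * y 0)
    + (x 1 + y 1)^j * (th (x 0 + y 0) (x 1 + y 1) (x 2 + y 2) (x 3 + y 3) * x 1
      + th (x 1 + y 1) (x 0 + y 0) (x 2 + y 2) (x 3 + y 3) * y 1)
    + (x 2 + y 2)^j * (th (x 0 + y 0) (x 1 + y 1) (x 2 + y 2) (x 3 + y 3) * x 2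
      + th (x 1 + y 1) (x 0 + y 0) (x 2 + y 2) (x 3 + y 3) * y 2)
    + (x 3 + y 3)^j * (th (x 0 + y 0) (x 1 + y 1) (x 2 + y 2) (x 3 + y 3) * x 3
      + th (x 1 + y 1) (x 0 + y 0) (x 2 + y 2) (x 3 + y 3) * y 3) := by
  simp only [zz, Fin.sum_univ_four]

lemma zz_dbl {R : Type*} [CommRing R] (x y : Fin 4 → R) (j : ℕ) :
    zz (fun i => x (![2,3,0,1] i)) (fun i => y (![2,3,0,1] i)) j = zz x y j := by
  rw [zz_eq, zz_eq]
  change (x 2 + y 2)^j * (th (x 2 + y 2) (x 3 + y 3) (x 0 + y 0) (x 1 + y 1) * x 2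
      + th (x 3 + y 3) (x 2 + y 2) (x 0 + y 0) (x 1 + y 1) * y 2)
    + (x 3 + y 3)^j * (th (x 2 + y 2) (x 3 + y 3) (x 0 + y 0) (x 1 + y 1) * x 3
      + th (x 3 + y 3) (x 2 + y 2) (x 0 + y 0) (x 1 + y 1) * y 3)
    + (x 0 + y 0)^j * (th (x 2 + y 2) (x 3 + y 3) (x 0 + y 0) (x 1 + y 1) * x 0
      + th (x 3 + y 3) (x 2 + y 2) (x 0 + y 0) (x 1 + y 1) * y 0)
    + (x 1 + y 1)^j * (th (x 2 + y 2) (x 3 + y 3) (x 0 + y 0) (x 1 + y 1) * x 1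
      + th (x 3 + y 3) (x 2 + y 2) (x 0 + y 0) (x 1 + y 1) * y 1) = _
  have e1 := th_dbl (x 0 + y 0) (x 1 + y 1) (x 2 + y 2) (x 3 + y 3)
  have e2 : th (x 3 + y 3) (x 2 + y 2) (x 0 + y 0) (x 1 + y 1) =
    th (x 1 + y 1) (x 0 + y 0) (x 2 + y 2) (x 3 + y 3) := by unfold th; ring
  rw [e1, e2]; abel

lemma zz_rot {R : Type*} [CommRing R] (x y : Fin 4 → R) (j : ℕ) :
    zz (fun i => x (![0,2,3,1] i)) (fun i => y (![0,2,3,1] i)) j = zz x y j := by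
  rw [zz_eq, zz_eq]
  change (x 0 + y 0)^j * (th (x 0 + y 0) (x 2 + y 2) (x 3 + y 3) (x 1 + y 1) * x 0
      + th (x 2 + y 2) (x 0 + y 0) (x 3 + y 3) (x 1 + y 1) * y 0)
    + (x 2 + y 2)^j * (th (x 0 + y 0) (x 2 + y 2) (x 3 + y 3) (x 1 + y 1) * x 2
      + th (x 2 + y 2) (x 0 + y 0) (x 3 + y 3) (x 1 + y 1) * y 2)
    + (x 3 + y 3)^j * (th (x 0 + y 0) (x 2 + y 2) (x 3 + y 3) (x 1 + y 1) * x 3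
      + th (x 2 + y 2) (x 0 + y 0) (x 3 + y 3) (x 1 + y 1) * y 3)
    + (x 1 + y 1)^j * (th (x 0 + y 0) (x 2 + y 2) (x 3 + y 3) (x 1 + y 1) * x 1
      + th (x 2 + y 2) (x 0 + y 0) (x 3 + y 3) (x 1 + y 1) * y 1) = _
  have e1 := th_rot (x 0 + y 0) (x 1 + y 1) (x 2 + y 2) (x 3 + y 3)
  have e2 : ∀ a b c d : R, th c a d b = th b a c d := by intros; unfold th; ring
  rw [e1, e2 (x 0 + y 0) (x 1 + y 1) (x 2 + y 2) (x 3 + y 3)]; abel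

lemma zz_odd {R : Type*} [CommRing R] (x y : Fin 4 → R) (j : ℕ) :
    zz (fun i => y (![1,0,2,3] i)) (fun i => x (![1,0,2,3] i)) j = zz x y j := by
  rw [zz_eq, zz_eq]
  change (y 1 + x 1)^j * (th (y 1 + x 1) (y 0 + x 0) (y 2 + x 2) (y 3 + x 3) * y 1
      + th (y 0 + x 0) (y 1 + x 1) (y 2 + x 2) (y 3 + x 3) * x 1)
    + (y 0 + x 0)^j * (th (y 1 + x 1) (y 0 + x 0) (y 2 + x 2) (y 3 + x 3) * y 0
      + th (y 0 + x 0) (y 1 + x 1) (y 2 + x 2) (y 3 + x 3) * x 0)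
    + (y 2 + x 2)^j * (th (y 1 + x 1) (y 0 + x 0) (y 2 + x 2) (y 3 + x 3) * y 2
      + th (y 0 + x 0) (y 1 + x 1) (y 2 + x 2) (y 3 + x 3) * x 2)
    + (y 3 + x 3)^j * (th (y 1 + x 1) (y 0 + x 0) (y 2 + x 2) (y 3 + x 3) * y 3
      + th (y 0 + x 0) (y 1 + x 1) (y 2 + x 2) (y 3 + x 3) * x 3) = _
  rw [add_comm (y 0), add_comm (y 1), add_comm (y 2), add_comm (y 3)]
  ring

lemma gens_dbl {R : Type*} [CommRing R] (x y : Fin 4 → R) :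
    gens (fun i => x (![2,3,0,1] i)) (fun i => y (![2,3,0,1] i)) = gens x y := by
  unfold gens
  simp only [zz_dbl]
  congr 1
  · simp; ring
  congr 1
  · simp; ring
  congr 1
  · simp; ring
  congr 1
  · simp; ring

lemma gens_rot {R : Type*} [CommRing R] (x y : Fin 4 → R) :
    gens (fun i => x (![0,2,3,1] i)) (fun i => y (![0,2,3,1] i)) = gens x y := by
  unfold gens
  simp only [zz_rot]
  congr 1
  · simp; ring
  congr 1
  · simp; ring
  congr 1
  · simp; ring
  congr 1
  · simp; ring

lemma gens_odd {R : Type*} [CommRing R] (x y : Fin 4 → R) :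
    gens (fun i => y (![1,0,2,3] i)) (fun i => x (![1,0,2,3] i)) = gens x y := by
  unfold gens
  simp only [zz_odd]
  congr 1
  · simp; ring
  congr 1
  · simp; ring
  congr 1
  · simp; ring
  congr 1
  · simp; ring

lemma gens_map {K L : Type*} [Field K] [Field L] [Algebra K L] (f : L ≃ₐ[K] L)
    (x y : Fin 4 → L) (j : Fin 8) :
    f (gens x y j) = gens (fun i => f (x i)) (fun i => f (y i)) j := by
  fin_cases j <;> simp [gens, zz, th, Fin.sum_univ_four]

lemma solve_mem {K L : Type*} [Field K] [Field L] [Algebra K L] (E : IntermediateField K L)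
    (a w : Fin 4 → L) (ha : ∀ i, a i ∈ E) (hinj : Function.Injective a)
    (hz : ∀ j < 4, ∑ i, a i ^ j * w i ∈ E) (i : Fin 4) : w i ∈ E := by
  have key : ∀ (A : Fin 4 → L) (W : Fin 4 → L), (∀ i, A i ∈ E) → Function.Injective A →
      (∀ j < 4, A 0 ^ j * W 0 + A 1 ^ j * W 1 + A 2 ^ j * W 2 + A 3 ^ j * W 3 ∈ E) →
      W 0 ∈ E := by
    intro A W hA hA' hZ
    have h1 : A 0 - A 1 ≠ 0 := sub_ne_zero.2 (hA'.ne (by decide))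
    have h2 : A 0 - A 2 ≠ 0 := sub_ne_zero.2 (hA'.ne (by decide))
    have h3 : A 0 - A 3 ≠ 0 := sub_ne_zero.2 (hA'.ne (by decide))
    have z0 := hZ 0 (by norm_num)
    have z1 := hZ 1 (by norm_num)
    have z2 := hZ 2 (by norm_num)
    have z3 := hZ 3 (by norm_num)
    have hm : (A 0 - A 1) * (A 0 - A 2) * (A 0 - A 3) * W 0 ∈ E := by
      have : (A 0 - A 1) * (A 0 - A 2) * (A 0 - A 3) * W 0 =
        (A 0 ^ 3 * W 0 + A 1 ^ 3 * W 1 + A 2 ^ 3 * W 2 + A 3 ^ 3 * W 3)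
        - (A 1 + A 2 + A 3) * (A 0 ^ 2 * W 0 + A 1 ^ 2 * W 1 + A 2 ^ 2 * W 2 + A 3 ^ 2 * W 3)
        + (A 1 * A 2 + A 1 * A 3 + A 2 * A 3) *
          (A 0 ^ 1 * W 0 + A 1 ^ 1 * W 1 + A 2 ^ 1 * W 2 + A 3 ^ 1 * W 3)
        - (A 1 * A 2 * A 3) *
          (A 0 ^ 0 * W 0 + A 1 ^ 0 * W 1 + A 2 ^ 0 * W 2 + A 3 ^ 0 * W 3) := by ring
      rw [this]
      have hA1 := hA 1
      have hA2 := hA 2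
      have hA3 := hA 3
      exact sub_mem (add_mem (sub_mem z3 (mul_mem (add_mem (add_mem hA1 hA2) hA3) z2))
        (mul_mem (add_mem (add_mem (mul_mem hA1 hA2) (mul_mem hA1 hA3)) (mul_mem hA2 hA3)) z1))
        (mul_mem (mul_mem (mul_mem hA1 hA2) hA3) z0)
    have hc : (A 0 - A 1) * (A 0 - A 2) * (A 0 - A 3) ∈ E :=
      mul_mem (mul_mem (sub_mem (hA 0) (hA 1)) (sub_mem (hA 0) (hA 2))) (sub_mem (hA 0) (hA 3))
    have := mul_mem (inv_mem hc) hm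
    rwa [inv_mul_cancel_left₀ (mul_ne_zero (mul_ne_zero h1 h2) h3)] at this
  have h := key (fun k => a (Equiv.swap 0 i k)) (fun k => w (Equiv.swap 0 i k)) (fun k => ha _)
    (hinj.comp (Equiv.injective _)) (fun j hj => by
      have := hz j hj
      rw [← Equiv.sum_comp (Equiv.swap 0 i), Fin.sum_univ_four] at this
      exact this)
  simpa using h

lemma th_mem {K L : Type*} [Field K] [Field L] [Algebra K L] (E : IntermediateField K L)
    {a b c d : L} (ha : a ∈ E) (hb : b ∈ E) (hc : c ∈ E) (hd : d ∈ E) : th a b c d ∈ E := by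
  unfold th
  repeat' first | apply add_mem | apply mul_mem | apply pow_mem
  all_goals assumption

/-- Any subfield containing the `a i` and the generators contains the `x i` and `y i`. -/
lemma recover {K L : Type*} [Field K] [Field L] [Algebra K L] (E : IntermediateField K L)
    (x y : Fin 4 → L) (ha : ∀ i, x i + y i ∈ E) (hinj : Function.Injective fun i => x i + y i)
    (hg : ∀ j, gens x y j ∈ E) (i : Fin 4) : x i ∈ E ∧ y i ∈ E := by
  set a : Fin 4 → L := fun i => x i + y i with hadef
  have hT := th_mem E (ha 0) (ha 1) (ha 2) (ha 3)
  have hT' := th_mem E (ha 1) (ha 0) (ha 2) (ha 3)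
  have hw := solve_mem E a (fun i => th (a 0) (a 1) (a 2) (a 3) * x i
    + th (a 1) (a 0) (a 2) (a 3) * y i) ha hinj (fun j hj => by
      interval_cases j
      · exact hg 4
      · exact hg 5
      · exact hg 6
      · exact hg 7) i
  have hx : x i ∈ E := by
    have hne : th (a 0) (a 1) (a 2) (a 3) - th (a 1) (a 0) (a 2) (a 3) ≠ 0 := by
      rw [th_sub]
      have hs : ∀ i j, i ≠ j → a i - a j ≠ 0 := fun i j h => sub_ne_zero.2 (hinj.ne h)
      refine mul_ne_zero (mul_ne_zero (mul_ne_zero (mul_ne_zero (mul_ne_zero ?_ ?_) ?_) ?_) ?_) ?_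
        <;> exact hs _ _ (by decide)
    have h1 := sub_mem hw (mul_mem hT' (ha i))
    have h2 := mul_mem (inv_mem (sub_mem hT hT')) h1
    have h3 : x i = (th (a 0) (a 1) (a 2) (a 3) - th (a 1) (a 0) (a 2) (a 3))⁻¹ *
        (th (a 0) (a 1) (a 2) (a 3) * x i + th (a 1) (a 0) (a 2) (a 3) * y i
          - th (a 1) (a 0) (a 2) (a 3) * (x i + y i)) := by
      rw [eq_inv_mul_iff_mul_eq₀ hne]; ring
    rw [h3]; exact h2
  refine ⟨hx, ?_⟩
  have := sub_mem (ha i) hx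
  rwa [add_sub_cancel_left] at this

lemma perm_top (H : Subgroup (Equiv.Perm (Fin 4))) (p q : Equiv.Perm (Fin 4))
    (hp : ∀ i, p i = ![0,2,3,1] i) (hq : ∀ i, q i = ![1,0,2,3] i) (hpH : p ∈ H) (hqH : q ∈ H) :
    H = ⊤ := by
  have e1 : q = Equiv.swap 0 1 := by
    ext i; rw [hq]; revert i; decide
  have e3 : p = Equiv.swap 1 2 * Equiv.swap 2 3 := by
    ext i; rw [hp]; revert i; decide
  have e4 : q * p = finRotate 4 := by
    rw [e1, e3]; decide
  rw [eq_top_iff, ← Equiv.Perm.closure_cycle_adjacent_swap isCycle_finRotate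
    (support_finRotate (n := 2)) 0, Subgroup.closure_le]
  rintro g (rfl | rfl)
  · rw [← e4]; exact H.mul_mem hqH hpH
  · have : finRotate 4 0 = 1 := by decide
    rw [this, ← e1]; exact hqH

open Polynomial in
lemma quartic_prod {L : Type*} [Field L] (a : Fin 4 → L) :
    (X ^ 4 - C (a 0 + a 1 + a 2 + a 3) * X ^ 3
      + C (a 0 * a 1 + a 0 * a 2 + a 0 * a 3 + a 1 * a 2 + a 1 * a 3 + a 2 * a 3) * X ^ 2
      - C (a 0 * a 1 * a 2 + a 0 * a 1 * a 3 + a 0 * a 2 * a 3 + a 1 * a 2 * a 3) * X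
      + C (a 0 * a 1 * a 2 * a 3) : L[X]) = ∏ i, (X - C (a i)) := by
  rw [Fin.prod_univ_four]
  simp only [map_add, map_mul]
  ring

open Polynomial in
theorem core {K L : Type} [Field K] [Field L] [Algebra K L] (x y : Fin 4 → L)
    (hgen : IntermediateField.adjoin K (Set.range x ∪ Set.range y) = ⊤)
    (hinj : Function.Injective fun i => x i + y i) (htr : 8 ≤ Algebra.trdeg K L)
    (s f k : L ≃ₐ[K] L)
    (hsx : ∀ i, s (x i) = x (![2,3,0,1] i)) (hsy : ∀ i, s (y i) = y (![2,3,0,1] i))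
    (hfx : ∀ i, f (x i) = x (![0,2,3,1] i)) (hfy : ∀ i, f (y i) = y (![0,2,3,1] i))
    (hkx : ∀ i, k (x i) = y (![1,0,2,3] i)) (hky : ∀ i, k (y i) = x (![1,0,2,3] i)) :
    IsRatExt K (IntermediateField.fixedField (Subgroup.closure {s, f, k})) := by
  set G : Subgroup (L ≃ₐ[K] L) := Subgroup.closure {s, f, k} with hG
  set t := gens x y with ht
  set a : Fin 4 → L := fun i => x i + y i with ha
  set F : IntermediateField K L := IntermediateField.adjoin K (Set.range t) with hF
  have htF : ∀ j, t j ∈ F := fun j => IntermediateField.subset_adjoin _ _ ⟨j, rfl⟩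
  -- `F` is contained in the fixed field
  have hle : F ≤ IntermediateField.fixedField G := by
    rw [IntermediateField.le_iff_le, hG, Subgroup.closure_le]
    have hfix : ∀ g : L ≃ₐ[K] L, (∀ j, g (t j) = t j) → g ∈ F.fixingSubgroup := by
      intro g hg
      rw [IntermediateField.mem_fixingSubgroup_iff]
      intro z hz
      induction hz using IntermediateField.adjoin_induction with
      | mem z hz => obtain ⟨j, rfl⟩ := hz; exact hg j
      | algebraMap z => exact g.commutes z
      | add u v _ _ hu hv => rw [map_add, hu, hv]
      | inv u _ hu => rw [map_inv₀, hu]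
      | mul u v _ _ hu hv => rw [map_mul, hu, hv]
    rintro g (rfl | rfl | rfl) <;> refine hfix _ fun j => ?_
    · rw [ht, gens_map]; simp only [hsx, hsy]; rw [gens_dbl]
    · rw [ht, gens_map]; simp only [hfx, hfy]; rw [gens_rot]
    · rw [ht, gens_map]; simp only [hkx, hky]; rw [gens_odd]
  -- any intermediate field containing everything is the top one
  have htop : ∀ E : IntermediateField K L, (∀ j, t j ∈ E) → (∀ i, a i ∈ E) → E = ⊤ := by
    intro E h1 h2
    rw [eq_top_iff, ← hgen, IntermediateField.adjoin_le_iff]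
    rintro z (⟨i, rfl⟩ | ⟨i, rfl⟩)
    · exact (recover E x y h2 hinj h1 i).1
    · exact (recover E x y h2 hinj h1 i).2
  -- the polynomial
  let P : F[X] := X ^ 4 - C ⟨t 0, htF 0⟩ * X ^ 3 + C ⟨t 1, htF 1⟩ * X ^ 2
    - C ⟨t 2, htF 2⟩ * X + C ⟨t 3, htF 3⟩
  have hP : P.map (algebraMap F L) = ∏ i, (X - C (a i)) := by
    rw [← quartic_prod]
    simp only [P, Polynomial.map_add, Polynomial.map_sub, Polynomial.map_mul, Polynomial.map_pow,
      Polynomial.map_X, Polynomial.map_C]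
    rfl
  have hP0 : P.map (algebraMap F L) ≠ 0 := by
    rw [hP]; exact Finset.prod_ne_zero_iff.2 fun i _ => X_sub_C_ne_zero _
  have hroot : ∀ z : L, z ∈ P.rootSet L ↔ ∃ i, z = a i := by
    intro z
    rw [Polynomial.mem_rootSet_of_ne (fun h => hP0 (by rw [h, Polynomial.map_zero])),
      ← Polynomial.eval_map_algebraMap, hP, Polynomial.eval_prod, Finset.prod_eq_zero_iff]
    simp [sub_eq_zero]
  have hsep : P.Separable := by
    rw [← Polynomial.separable_map (algebraMap F L), hP, separable_prod_X_sub_C_iff]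
    exact hinj
  have hspl : P.IsSplittingField F L := by
    rw [isSplittingField_iff_intermediateField]
    refine ⟨?_, ?_⟩
    · rw [hP]; exact Polynomial.Splits.prod fun i _ => Polynomial.Splits.X_sub_C _
    · have := htop ((IntermediateField.adjoin F (P.rootSet L)).restrictScalars K)
        (fun j => by
          rw [IntermediateField.mem_restrictScalars]
          exact (IntermediateField.adjoin F (P.rootSet L)).algebraMap_mem ⟨t j, htF j⟩)
        (fun i => by
          rw [IntermediateField.mem_restrictScalars]
          exact IntermediateField.subset_adjoin _ _ ((hroot _).2 ⟨i, rfl⟩))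
      rw [eq_top_iff]
      intro z _
      have hz : z ∈ (⊤ : IntermediateField K L) := IntermediateField.mem_top
      rwa [← this, IntermediateField.mem_restrictScalars] at hz
  have hgal : IsGalois F L := IsGalois.of_separable_splitting_field hsep
  have hfin : FiniteDimensional F L := Polynomial.IsSplittingField.finiteDimensional L P
  -- the group realizes every permutation of the `a i`
  have hreal : ∀ p : Equiv.Perm (Fin 4), ∃ g ∈ G, ∀ i, g (a i) = a (p i) := by
    let H : Subgroup (Equiv.Perm (Fin 4)) :=
      { carrier := {p | ∃ g ∈ G, ∀ i, g (a i) = a (p i)}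
        mul_mem' := by
          rintro p q ⟨g, hg, hgp⟩ ⟨h, hh, hhq⟩
          exact ⟨g * h, G.mul_mem hg hh, fun i => by
            rw [AlgEquiv.mul_apply, hhq, hgp, Equiv.Perm.mul_apply]⟩
        one_mem' := ⟨1, G.one_mem, fun i => rfl⟩
        inv_mem' := by
          rintro p ⟨g, hg, hgp⟩
          refine ⟨g⁻¹, G.inv_mem hg, fun i => ?_⟩
          have := hgp (p⁻¹ i)
          rw [← Equiv.Perm.mul_apply, mul_inv_cancel, Equiv.Perm.one_apply] at this
          rw [← this, ← AlgEquiv.mul_apply, inv_mul_cancel, AlgEquiv.one_apply] }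
    have hH : H = ⊤ := by
      refine perm_top H (Equiv.swap 1 2 * Equiv.swap 2 3) (Equiv.swap 0 1) (by decide) (by decide)
        ⟨f, Subgroup.subset_closure (by simp), fun i => ?_⟩
        ⟨k, Subgroup.subset_closure (by simp), fun i => ?_⟩
      · have : ∀ i, (Equiv.swap 1 2 * Equiv.swap 2 3 : Equiv.Perm (Fin 4)) i = ![0,2,3,1] i := by
          decide
        rw [this, ha]; simp only [map_add, hfx, hfy]
      · have : ∀ i, (Equiv.swap 0 1 : Equiv.Perm (Fin 4)) i = ![1,0,2,3] i := by
          decide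
        rw [this, ha]; simp only [map_add, hkx, hky]; rw [add_comm]
    intro p
    have : p ∈ H := by rw [hH]; trivial
    exact this
  -- hence the fixed field is `F`
  have hge : IntermediateField.fixedField G ≤ F := by
    intro z hz
    rw [IntermediateField.mem_fixedField_iff] at hz
    have hz' : z ∈ Set.range (algebraMap F L) := by
      rw [IsGalois.mem_range_algebraMap_iff_fixed]
      intro τ
      have hτ : ∀ i, ∃ j, τ (a i) = a j := by
        intro i
        have h1 : a i ∈ P.rootSet L := (hroot _).2 ⟨i, rfl⟩
        rw [← hroot]
        rw [Polynomial.mem_rootSet_of_ne (fun h => hP0 (by rw [h, Polynomial.map_zero]))] at h1 ⊢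
        rw [Polynomial.aeval_algEquiv, AlgHom.comp_apply, h1]; simp
      choose q hq using hτ
      have hqinj : Function.Injective q := by
        intro i j hij
        apply hinj
        apply τ.injective
        change τ (a i) = τ (a j)
        rw [hq, hq, hij]
      obtain ⟨g, hgG, hg⟩ := hreal (Equiv.ofBijective q (Finite.injective_iff_bijective.1 hqinj))
      have hmem : ∀ u : L, τ u = g u → u ∈ IntermediateField.fixedField
          (Subgroup.zpowers (g⁻¹ * τ.restrictScalars K)) := by
        intro u hu
        rw [IntermediateField.mem_fixedField_iff]
        have hst : Subgroup.zpowers (g⁻¹ * τ.restrictScalars K) ≤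
            MulAction.stabilizer (L ≃ₐ[K] L) u := by
          rw [Subgroup.zpowers_le, MulAction.mem_stabilizer_iff, AlgEquiv.smul_def,
            AlgEquiv.mul_apply, AlgEquiv.restrictScalars_apply, hu, ← AlgEquiv.mul_apply,
            inv_mul_cancel, AlgEquiv.one_apply]
        exact fun h hh => hst hh
      have hE := htop (IntermediateField.fixedField
        (Subgroup.zpowers (g⁻¹ * τ.restrictScalars K)))
        (fun j => hmem _ ?_) (fun i => hmem _ ?_)
      · have hm : z ∈ IntermediateField.fixedField
            (Subgroup.zpowers (g⁻¹ * τ.restrictScalars K)) := by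
          rw [hE]; trivial
        rw [IntermediateField.mem_fixedField_iff] at hm
        have h2 := hm _ (Subgroup.mem_zpowers _)
        have h3 := congrArg g h2
        rw [← AlgEquiv.mul_apply, mul_inv_cancel_left, hz g hgG] at h3
        exact h3
      · have h1 : τ (t j) = t j := τ.commutes ⟨t j, htF j⟩
        have h2 := hle (htF j)
        rw [IntermediateField.mem_fixedField_iff] at h2
        rw [h1, h2 g hgG]
      · rw [hq, hg]; rfl
    obtain ⟨w, rfl⟩ := hz'
    exact w.2
  have heq : IntermediateField.fixedField G = F := le_antisymm hge hle
  -- algebraic independence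
  have hind : AlgebraicIndependent K t := by
    have halg : Algebra.IsAlgebraic F L := inferInstance
    open scoped IntermediateField.algebraAdjoinAdjoin in
    have : Algebra.IsAlgebraic (Algebra.adjoin K (Set.range t)) L := by
      exact (IsFractionRing.comap_isAlgebraic_iff (K := F)).2 halg
    exact (Algebra.IsAlgebraic.isTranscendenceBasis_of_le_trdeg_of_finite K t (by simpa using htr)).1
  refine ⟨8, fun j => ⟨t j, hle (htF j)⟩, ?_, ?_⟩
  · exact AlgebraicIndependent.of_comp (IntermediateField.fixedField G).val hind
  · apply IntermediateField.lift_injective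
    rw [IntermediateField.lift_adjoin, IntermediateField.lift_top, ← Set.range_comp]
    exact heq.symm

lemma permHom_Xvar (K : Type) [Field K] (I : Type) (σ : Equiv.Perm I) (i : I) :
    permHom K I σ (Xvar K I i) = Xvar K I (σ i) := by
  unfold Xvar permHom
  rw [MonoidHom.comp_apply, IsFractionRing.fieldEquivOfAlgEquivHom_apply,
    IsFractionRing.fieldEquivOfAlgEquiv_algebraMap]
  congr 1
  exact MvPolynomial.rename_X _ _

lemma adjoin_Xvar (K : Type) [Field K] (I : Type) :
    IntermediateField.adjoin K (Set.range (Xvar K I)) = ⊤ := by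
  rw [eq_top_iff]
  intro z _
  have hpoly : ∀ p : MvPolynomial I K, algebraMap (MvPolynomial I K) (RFF K I) p ∈
      IntermediateField.adjoin K (Set.range (Xvar K I)) := by
    intro p
    induction p using MvPolynomial.induction_on with
    | C c =>
      have := (IntermediateField.adjoin K (Set.range (Xvar K I))).algebraMap_mem c
      rwa [IsScalarTower.algebraMap_apply K (MvPolynomial I K) (RFF K I)] at this
    | add p q hp hq => rw [map_add]; exact add_mem hp hq
    | mul_X p i hp =>
      rw [map_mul]
      exact mul_mem hp (IntermediateField.subset_adjoin _ _ ⟨i, rfl⟩)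
  obtain ⟨p, q, -, rfl⟩ := IsFractionRing.div_surjective (MvPolynomial I K) z
  exact div_mem (hpoly p) (hpoly q)

lemma trdeg_RFF (K : Type) [Field K] : 8 ≤ Algebra.trdeg K (RFF K (Fin 8)) := by
  have : Algebra.IsAlgebraic (MvPolynomial (Fin 8) K) (RFF K (Fin 8)) :=
    IsLocalization.isAlgebraic _ (nonZeroDivisors (MvPolynomial (Fin 8) K))
  have h := (IsTranscendenceBasis.mvPolynomial (Fin 8) K).algebraMap_comp (A := RFF K (Fin 8))
  rw [← h.cardinalMk_eq_trdeg]
  simp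

/-- **Rationality for `G₁₄`.** For any field `K`, the subgroup `G₁₄ ⊆ S₈` of order 24 generated by `σ₂ = (1,3)(2,4)(5,7)(6,8)`, `φ̃₁ = (2,3,4)(6,7,8)` and `κ° = (1,6)(2,5)(3,7)(4,8)` has `K`-rational fixed field. -/
theorem rationality_G14 (K : Type) [Field K] :
    IsRatExt K ↥(fixedSub K (Fin 8) (Subgroup.closure
      {Equiv.swap (0 : Fin 8) 2 * Equiv.swap 1 3 * Equiv.swap 4 6 * Equiv.swap 5 7,
       (Equiv.swap (1 : Fin 8) 2 * Equiv.swap 2 3) * (Equiv.swap (5 : Fin 8) 6 * Equiv.swap 6 7),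
       Equiv.swap (0 : Fin 8) 5 * Equiv.swap 1 4 * Equiv.swap 2 6 * Equiv.swap 3 7})) := by
  have hX : Function.Injective (fun i : Fin 4 => Xvar K (Fin 8) (![0,1,2,3] i)
      + Xvar K (Fin 8) (![4,5,6,7] i)) := by
    intro i j hij
    simp only [Xvar, ← map_add] at hij
    have h1 := IsFractionRing.injective (MvPolynomial (Fin 8) K) (RFF K (Fin 8)) hij
    by_contra hne
    have h2 := congrArg (MvPolynomial.eval (fun m : Fin 8 => if m = ![0,1,2,3] i then (1 : K) else 0)) h1
    simp only [map_add, MvPolynomial.eval_X] at h2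
    revert h2 hne
    clear h1 hij
    fin_cases i <;> fin_cases j <;> simp
  unfold fixedSub
  rw [MonoidHom.map_closure, Set.image_insert_eq, Set.image_pair]
  refine core (fun i : Fin 4 => Xvar K (Fin 8) (![0,1,2,3] i))
    (fun i => Xvar K (Fin 8) (![4,5,6,7] i)) ?_ hX (trdeg_RFF K) _ _ _ ?_ ?_ ?_ ?_ ?_ ?_
  · rw [eq_top_iff, ← adjoin_Xvar K (Fin 8)]
    apply IntermediateField.adjoin.mono
    rintro _ ⟨i, rfl⟩
    have hi : (∃ j : Fin 4, ![0,1,2,3] j = i) ∨ (∃ j : Fin 4, ![4,5,6,7] j = i) := by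
      revert i; decide
    rcases hi with ⟨j, rfl⟩ | ⟨j, rfl⟩
    · exact Or.inl ⟨j, rfl⟩
    · exact Or.inr ⟨j, rfl⟩
  all_goals
    intro i
    rw [permHom_Xvar]
    congr 1
    revert i
    decide
end
end

section
/- Let K be any field, and let G_24 ⊆ S_8 be the subgroup of order 48 generated by σ_1 = (1,2)(3,4)(5,6)(7,8), σ_2 = (1,3)(2,4)(5,7)(6,8), κ = (1,5)(2,6)(3,7)(4,8), φ_1 = (2,3,4)(7,6,5), and φ̃_2 = (3,4)(5,6). Then the fixed field K(x_1,…,x_8)^{G_24} is K-rational. -/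
noncomputable section

namespace G24
open Polynomial

section abstractPart
variable {K L : Type} [Field K] [Field L] [Algebra K L]

/-- The quartic with roots `a i`. -/
def quartic (a : Fin 4 → L) : L[X] := ∏ i, (X - C (a i))

/-- The eight generators. -/
def gens (a w : Fin 4 → L) : Fin 4 ⊕ Fin 4 → L
  | .inl j => (quartic a).coeff j
  | .inr j => if j = 1 then w 1 * (1 - w 1) else w j / (2 * w 1 - 1)

lemma quartic_monic (a : Fin 4 → L) : (quartic a).Monic :=
  monic_prod_of_monic _ _ fun i _ => monic_X_sub_C (a i)

lemma quartic_natDegree (a : Fin 4 → L) : (quartic a).natDegree = 4 := by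
  unfold quartic
  rw [natDegree_prod_of_monic _ _ fun i _ => monic_X_sub_C (a i)]
  simp

/-- Uniqueness of interpolation. -/
lemma interp_unique {a u v : Fin 4 → L} (ha : Function.Injective a)
    (h : ∀ i, ∑ j, u j * a i ^ (j : ℕ) = ∑ j, v j * a i ^ (j : ℕ)) : u = v := by
  have hdet := Matrix.det_vandermonde_ne_zero_iff.mpr ha
  have hinj := Matrix.mulVec_injective_iff_isUnit.mpr
    ((Matrix.isUnit_iff_isUnit_det _).mpr (isUnit_iff_ne_zero.mpr hdet))
  apply hinj
  funext i
  simp only [Matrix.mulVec, dotProduct, Matrix.vandermonde_apply]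
  simpa [mul_comm] using h i

lemma hom_w1 {a y w : Fin 4 → L} (ha : Function.Injective a)
    (hy : ∀ i, y i = ∑ j, w j * a i ^ (j : ℕ))
    (f : L →ₐ[K] L) (p : Equiv.Perm (Fin 4)) (hfa : ∀ i, f (a i) = a (p i))
    (h : ∀ i, f (y i) = y (p i)) (j : Fin 4) : f (w j) = w j := by
  have hfy' : ∀ i, f (y i) = ∑ j, f (w j) * a (p i) ^ (j : ℕ) := fun i => by
    rw [hy]; simp [hfa]
  have hw : (fun j => f (w j)) = w := by
    apply interp_unique ha
    intro i
    rw [← hy, ← p.apply_symm_apply i, ← h, hfy']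
  exact congrFun hw j

/-- Homomorphisms acting in the expected way fix the generators. -/
lemma hom_fixes {a y w : Fin 4 → L} (ha : Function.Injective a)
    (hy : ∀ i, y i = ∑ j, w j * a i ^ (j : ℕ))
    (f : L →ₐ[K] L) (p : Equiv.Perm (Fin 4)) (hfa : ∀ i, f (a i) = a (p i))
    (hfy : (∀ i, f (y i) = y (p i)) ∨ (∀ i, f (y i) = a (p i) - y (p i))) :
    (f (w 1) = w 1 ∨ f (w 1) = 1 - w 1) ∧ ∀ s, f (gens a w s) = gens a w s := by
  have hq : (quartic a).map (f : L →+* L) = quartic a := by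
    simp only [quartic, Polynomial.map_prod, Polynomial.map_sub, map_X, map_C]
    simp only [RingHom.coe_coe, hfa]
    exact Equiv.prod_comp p (fun i => X - C (a i))
  have hl : ∀ j : Fin 4, f ((quartic a).coeff j) = (quartic a).coeff j := fun j => by
    conv_rhs => rw [← hq, coeff_map]
    rfl
  have hfy' : ∀ i, f (y i) = ∑ j, f (w j) * a (p i) ^ (j : ℕ) := fun i => by
    rw [hy]; simp [hfa]
  rcases hfy with h | h
  · have hw' : ∀ j, f (w j) = w j := hom_w1 ha hy f p hfa h
    refine ⟨.inl (hw' 1), ?_⟩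
    rintro (j | j)
    · exact hl j
    · simp only [gens]
      split_ifs <;> simp [hw', map_ofNat]
  · have hw : (fun j => f (w j)) = fun j => (if j = 1 then 1 else 0) - w j := by
      apply interp_unique ha
      intro i
      have := hfy' (p.symm i)
      rw [h] at this
      simp only [Equiv.apply_symm_apply] at this
      rw [← this, hy]
      simp only [Fin.sum_univ_four]
      simp
      ring
    have hw' : ∀ j, f (w j) = (if j = 1 then 1 else 0) - w j := fun j => congrFun hw j
    have h1 : f (w 1) = 1 - w 1 := by simpa using hw' 1
    refine ⟨.inr h1, ?_⟩
    rintro (j | j)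
    · exact hl j
    · simp only [gens]
      split_ifs with hj
      · simp [h1]; ring
      · have h2 := hw' j
        rw [if_neg hj] at h2
        rw [map_div₀, h2]
        simp only [map_sub, map_mul, map_one, map_ofNat, h1]
        rw [show 2 * (1 - w 1) - 1 = - (2 * w 1 - 1) by ring, zero_sub, neg_div_neg_eq]

/-- The field generated by the eight generators. -/
abbrev FF (K : Type) {L : Type} [Field K] [Field L] [Algebra K L] (a w : Fin 4 → L) :
    IntermediateField K L :=
  IntermediateField.adjoin K (Set.range (gens a w))

lemma gens_mem (a w : Fin 4 → L) (s) : gens a w s ∈ FF K a w :=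
  IntermediateField.subset_adjoin _ _ ⟨s, rfl⟩

lemma quartic_lifts (a w : Fin 4 → L) :
    ∃ q : (FF K a w)[X], q.map (algebraMap (FF K a w) L) = quartic a := by
  rw [← mem_lifts, lifts_iff_coeff_lifts]
  intro n
  rcases lt_trichotomy n 4 with h | h | h
  · exact ⟨⟨_, gens_mem a w (.inl ⟨n, h⟩)⟩, rfl⟩
  · refine ⟨1, ?_⟩
    have := (quartic_monic a).coeff_natDegree
    rw [quartic_natDegree] at this
    rw [h, this, map_one]
  · refine ⟨0, ?_⟩
    rw [coeff_eq_zero_of_natDegree_lt (by rwa [quartic_natDegree]), map_zero]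

/-- All the roots. -/
def rts (a w : Fin 4 → L) : Fin 4 ⊕ Fin 2 → L := Sum.elim a ![w 1, 1 - w 1]

lemma rts_prod (a w : Fin 4 → L) :
    ∏ s, (X - C (rts a w s)) = quartic a * (X ^ 2 - X + C (w 1 * (1 - w 1))) := by
  rw [Fintype.prod_sum_type]
  simp only [rts, Sum.elim_inl, Sum.elim_inr, Fin.prod_univ_two]
  simp only [quartic, Matrix.cons_val_zero, Matrix.cons_val_one, C_sub, C_mul, C_1]
  ring

lemma rts_lifts (a w : Fin 4 → L) :
    ∃ q : (FF K a w)[X], q.map (algebraMap (FF K a w) L) = ∏ s, (X - C (rts a w s)) := by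
  obtain ⟨q, hq⟩ := quartic_lifts (K := K) a w
  let d : FF K a w := ⟨_, gens_mem a w (.inr 1)⟩
  have hd : algebraMap (FF K a w) L d = w 1 * (1 - w 1) := by
    change gens a w (.inr 1) = _
    simp [gens]
  refine ⟨q * (X ^ 2 - X + C d), ?_⟩
  rw [rts_prod, Polynomial.map_mul, hq]
  simp only [Polynomial.map_add, Polynomial.map_sub, Polynomial.map_pow, map_X, map_C, hd]

lemma w_eq {a w : Fin 4 → L} (hm : 2 * w 1 - 1 ≠ 0) {j : Fin 4} (hj : j ≠ 1) :
    w j = gens a w (.inr j) * (2 * w 1 - 1) := by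
  simp only [gens, if_neg hj]
  field_simp

lemma isGalois_FF {a y w : Fin 4 → L} (hm : 2 * w 1 - 1 ≠ 0)
    (hr : Function.Injective (rts a w))
    (hy : ∀ i, y i = ∑ j, w j * a i ^ (j : ℕ))
    (htop : IntermediateField.adjoin K (Set.range a ∪ Set.range y) = ⊤) :
    IsGalois (FF K a w) L ∧ FiniteDimensional (FF K a w) L := by
  obtain ⟨q, hq⟩ := rts_lifts (K := K) a w
  have hne : q ≠ 0 := by
    rintro rfl
    rw [Polynomial.map_zero] at hq
    exact (monic_prod_of_monic _ _ fun i _ => monic_X_sub_C (rts a w i)).ne_zero hq.symm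
  have hsep : q.Separable := by
    rw [← separable_map (algebraMap (FF K a w) L), hq]
    exact separable_prod_X_sub_C_iff.mpr hr
  have hsplit : q.IsSplittingField (FF K a w) L := by
    rw [isSplittingField_iff_intermediateField]
    constructor
    · rw [hq]
      exact Splits.prod fun i _ => Splits.X_sub_C _
    · set M := IntermediateField.adjoin (FF K a w) (q.rootSet L) with hM
      have hroot : ∀ s, rts a w s ∈ M := fun s => by
        apply IntermediateField.subset_adjoin
        rw [mem_rootSet]
        refine ⟨hne, ?_⟩
        rw [aeval_def, ← eval_map, hq, eval_prod]
        exact Finset.prod_eq_zero (Finset.mem_univ s) (by simp)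
      have ha : ∀ i, a i ∈ M := fun i => hroot (.inl i)
      have h1 : w 1 ∈ M := hroot (.inr 0)
      have hw : ∀ j, w j ∈ M := fun j => by
        by_cases hj : j = 1
        · rw [hj]; exact h1
        · rw [w_eq (a := a) hm hj]
          refine mul_mem (M.algebraMap_mem ⟨_, gens_mem a w (.inr j)⟩) ?_
          refine sub_mem (mul_mem ?_ h1) (one_mem _)
          exact ofNat_mem M 2
      have hyM : ∀ i, y i ∈ M := fun i => by
        rw [hy]
        exact sum_mem fun j _ => mul_mem (hw j) (pow_mem (ha i) _)
      have : (⊤ : IntermediateField K L) ≤ M.restrictScalars K := by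
        rw [← htop, IntermediateField.adjoin_le_iff]
        rintro _ (⟨i, rfl⟩ | ⟨i, rfl⟩)
        · exact ha i
        · exact hyM i
      rw [eq_top_iff]
      intro z _
      exact this (IntermediateField.mem_top (x := z))
  exact ⟨IsGalois.of_separable_splitting_field hsep, IsSplittingField.finiteDimensional L q⟩

/-- Every automorphism over the field of generators acts in the expected way. -/
lemma gal_acts {a y w : Fin 4 → L} (hm : 2 * w 1 - 1 ≠ 0) (ha : Function.Injective a)
    (hy : ∀ i, y i = ∑ j, w j * a i ^ (j : ℕ)) (f : L ≃ₐ[FF K a w] L) :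
    ∃ p : Equiv.Perm (Fin 4), (∀ i, f (a i) = a (p i)) ∧
      ((∀ i, f (y i) = y (p i)) ∨ (∀ i, f (y i) = a (p i) - y (p i))) := by
  have hg : ∀ s, f (gens a w s) = gens a w s := fun s =>
    f.commutes ⟨_, gens_mem a w s⟩
  have hex : ∀ i, ∃ j, f (a i) = a j := fun i => by
    obtain ⟨q, hq⟩ := quartic_lifts (K := K) a w
    have h0 : aeval (a i) q = 0 := by
      rw [aeval_def, ← eval_map, hq, quartic, eval_prod]
      exact Finset.prod_eq_zero (Finset.mem_univ i) (by simp)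
    have h1 : aeval (f (a i)) q = 0 := by
      rw [aeval_algHom_apply f, h0, map_zero]
    rw [aeval_def, ← eval_map, hq, quartic, eval_prod, Finset.prod_eq_zero_iff] at h1
    obtain ⟨j, -, hj⟩ := h1
    refine ⟨j, ?_⟩
    simpa [sub_eq_zero] using hj
  choose p0 hp0 using hex
  have hinj : Function.Injective p0 := fun i j hij => by
    apply ha
    apply f.injective
    rw [hp0, hp0, hij]
  let p : Equiv.Perm (Fin 4) := Equiv.ofBijective p0 (Finite.injective_iff_bijective.mp hinj)
  have hp : ∀ i, f (a i) = a (p i) := hp0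
  refine ⟨p, hp, ?_⟩
  have hd := hg (.inr 1)
  simp only [gens, if_true, map_mul, map_sub, map_one] at hd
  have hd' : (f (w 1) - w 1) * (f (w 1) - (1 - w 1)) = 0 := by linear_combination -hd
  have hfw : ∀ j, j ≠ 1 → f (w j) = gens a w (.inr j) * (2 * f (w 1) - 1) := fun j hj => by
    conv_lhs => rw [w_eq (a := a) hm hj]
    simp [hg, map_ofNat]
  rcases mul_eq_zero.mp hd' with h | h
  · left
    have h1 : f (w 1) = w 1 := sub_eq_zero.mp h
    have hw : ∀ j, f (w j) = w j := fun j => by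
      by_cases hj : j = 1
      · rw [hj, h1]
      · rw [hfw j hj, h1, ← w_eq hm hj]
    intro i
    rw [hy, hy]
    simp [hw, hp]
  · right
    have h1 : f (w 1) = 1 - w 1 := sub_eq_zero.mp h
    have hw : ∀ j, j ≠ 1 → f (w j) = - w j := fun j hj => by
      rw [hfw j hj, h1]
      conv_rhs => rw [w_eq (a := a) hm hj]
      ring
    intro i
    rw [hy, hy]
    simp only [Fin.sum_univ_four, map_add, map_mul, map_pow, hp, h1,
      hw 0 (by decide), hw 2 (by decide), hw 3 (by decide)]
    simp
    ring

end abstractPart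
end G24

namespace G24
section concrete
variable (K : Type) [Field K]

/-- First half of the indices. -/
def lft (i : Fin 4) : Fin 8 := Fin.castAdd 4 i
/-- The partner indices. -/
def rgt (i : Fin 4) : Fin 8 := Fin.rev (Fin.castAdd 4 i)

lemma lft_or_rgt : ∀ k : Fin 8, (∃ i, k = lft i) ∨ (∃ i, k = rgt i) := by decide

lemma permHom_Xvar (g : Equiv.Perm (Fin 8)) (k : Fin 8) :
    permHom K (Fin 8) g (Xvar K (Fin 8) k) = Xvar K (Fin 8) (g k) := by
  simp [permHom, Xvar, renameHom]

lemma hom_ext_Xvar {f g : RFF K (Fin 8) →ₐ[K] RFF K (Fin 8)}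
    (h : ∀ k, f (Xvar K (Fin 8) k) = g (Xvar K (Fin 8) k)) (z) : f z = g z := by
  have hp : f.comp (IsScalarTower.toAlgHom K (MvPolynomial (Fin 8) K) (RFF K (Fin 8))) =
      g.comp (IsScalarTower.toAlgHom K (MvPolynomial (Fin 8) K) (RFF K (Fin 8))) :=
    MvPolynomial.algHom_ext fun k => h k
  have hp' : ∀ u, f (algebraMap _ _ u) = g (algebraMap _ _ u) := fun u => DFunLike.congr_fun hp u
  obtain ⟨u, v, -, rfl⟩ := IsFractionRing.div_surjective (MvPolynomial (Fin 8) K) z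
  rw [map_div₀, map_div₀, hp', hp']

lemma adjoin_Xvar (M : IntermediateField K (RFF K (Fin 8)))
    (h : ∀ k, Xvar K (Fin 8) k ∈ M) : M = ⊤ := by
  have hp : ∀ u : MvPolynomial (Fin 8) K, algebraMap _ (RFF K (Fin 8)) u ∈ M := fun u => by
    induction u using MvPolynomial.induction_on with
    | C c =>
      have : algebraMap (MvPolynomial (Fin 8) K) (RFF K (Fin 8)) (MvPolynomial.C c) =
          algebraMap K (RFF K (Fin 8)) c := by
        rw [IsScalarTower.algebraMap_apply K (MvPolynomial (Fin 8) K) (RFF K (Fin 8))]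
        rfl
      rw [this]
      exact M.algebraMap_mem c
    | add p q hp hq => rw [map_add]; exact add_mem hp hq
    | mul_X p k hp => rw [map_mul]; exact mul_mem hp (h k)
  rw [eq_top_iff]
  intro z _
  obtain ⟨u, v, -, rfl⟩ := IsFractionRing.div_surjective (MvPolynomial (Fin 8) K) z
  exact div_mem (hp u) (hp v)

/-- Sums `x_i + y_i` as polynomials. -/
def aR (i : Fin 4) : MvPolynomial (Fin 8) K := MvPolynomial.X (lft i) + MvPolynomial.X (rgt i)
/-- The `y_i` as polynomials. -/
def yR (i : Fin 4) : MvPolynomial (Fin 8) K := MvPolynomial.X (rgt i)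
/-- Sums `x_i + y_i`. -/
def aa (i : Fin 4) : RFF K (Fin 8) := Xvar K (Fin 8) (lft i) + Xvar K (Fin 8) (rgt i)
/-- The `y_i`. -/
def yy (i : Fin 4) : RFF K (Fin 8) := Xvar K (Fin 8) (rgt i)

/-- Specialization `y = 0`. -/
def spec : MvPolynomial (Fin 8) K →ₐ[K] MvPolynomial (Fin 8) K :=
  MvPolynomial.aeval fun k => if k.val < 4 then MvPolynomial.X k else 0

lemma spec_aR (i : Fin 4) : spec K (aR K i) = MvPolynomial.X (lft i) := by
  have h1 : (lft i).val < 4 := by simp [lft]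
  have h2 : ¬ (rgt i).val < 4 := by simp [rgt, Fin.val_rev]; omega
  simp only [spec, aR, map_add, MvPolynomial.aeval_X, if_pos h1, if_neg h2, add_zero]

lemma spec_yR (i : Fin 4) : spec K (yR K i) = 0 := by
  have h2 : ¬ (rgt i).val < 4 := by simp [rgt, Fin.val_rev]; omega
  simp only [spec, yR, MvPolynomial.aeval_X, if_neg h2]

lemma lft_inj : Function.Injective lft := by decide

lemma spec_aR_inj : Function.Injective (fun i => spec K (aR K i)) := by
  intro i j h
  simp only [spec_aR] at h
  exact lft_inj (MvPolynomial.X_injective h)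

lemma aR_inj : Function.Injective (aR K) := fun _ _ h => spec_aR_inj K (congrArg (spec K) h)

lemma algMap_inj :
    Function.Injective (algebraMap (MvPolynomial (Fin 8) K) (RFF K (Fin 8))) :=
  IsFractionRing.injective _ _

lemma aa_eq (i) : aa K i = algebraMap _ _ (aR K i) := by simp [aa, aR, Xvar]

lemma aa_inj : Function.Injective (aa K) := fun i j h => by
  rw [aa_eq, aa_eq] at h
  exact aR_inj K (algMap_inj K h)

lemma exists_w : ∃ w : Fin 4 → RFF K (Fin 8),
    (∀ i, yy K i = ∑ j, w j * aa K i ^ (j : ℕ)) ∧ 2 * w 1 - 1 ≠ 0 := by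
  set V := Matrix.vandermonde (aR K) with hV
  have hD : V.det ≠ 0 := Matrix.det_vandermonde_ne_zero_iff.mpr (aR_inj K)
  let ι := algebraMap (MvPolynomial (Fin 8) K) (RFF K (Fin 8))
  have hD' : ι V.det ≠ 0 := by
    rw [Ne, map_eq_zero_iff _ (algMap_inj K)]; exact hD
  refine ⟨fun j => ι (V.cramer (yR K) j) / ι V.det, ?_, ?_⟩
  · intro i
    have h := congrFun (Matrix.mulVec_cramer V (yR K)) i
    simp only [Matrix.mulVec, dotProduct, Pi.smul_apply, smul_eq_mul, hV,
      Matrix.vandermonde_apply] at h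
    have h' := congrArg ι h
    rw [map_sum, map_mul] at h'
    have hy : ι (yR K i) = yy K i := rfl
    rw [hy] at h'
    rw [eq_comm, ← mul_right_inj' hD', ← h', Finset.mul_sum]
    refine Finset.sum_congr rfl fun j _ => ?_
    rw [aa_eq, map_mul, map_pow]
    field_simp
    rw [← hV]
    ring
  · intro h
    rw [sub_eq_zero, mul_div_assoc', div_eq_one_iff_eq hD'] at h
    have h2 : 2 * V.cramer (yR K) 1 = V.det := by
      apply algMap_inj K
      rw [map_mul, map_ofNat]
      exact h
    have h3 := congrArg (spec K) h2
    have h4 : spec K (V.cramer (yR K) 1) = 0 := by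
      rw [Matrix.cramer_apply, AlgHom.map_det]
      apply Matrix.det_eq_zero_of_column_eq_zero 1
      intro i
      simp [spec_yR]
    rw [map_mul, h4, mul_zero, AlgHom.map_det] at h3
    have h5 : (spec K).mapMatrix V = Matrix.vandermonde (fun i => spec K (aR K i)) := by
      ext1 i j
      simp [hV, Matrix.vandermonde_apply]
    rw [h5] at h3
    exact Matrix.det_vandermonde_ne_zero_iff.mpr (spec_aR_inj K) h3.symm

/-- The generating set of the group. -/
abbrev GS : Set (Equiv.Perm (Fin 8)) :=
      {Equiv.swap (0 : Fin 8) 1 * Equiv.swap 2 3 * Equiv.swap 4 5 * Equiv.swap 6 7,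
       Equiv.swap (0 : Fin 8) 2 * Equiv.swap 1 3 * Equiv.swap 4 6 * Equiv.swap 5 7,
       Equiv.swap (0 : Fin 8) 4 * Equiv.swap 1 5 * Equiv.swap 2 6 * Equiv.swap 3 7,
       (Equiv.swap (1 : Fin 8) 2 * Equiv.swap 2 3) * (Equiv.swap (6 : Fin 8) 5 * Equiv.swap 5 4),
       Equiv.swap (2 : Fin 8) 3 * Equiv.swap 4 5}

/-- Product action without flip. -/
def Act0 (g : Equiv.Perm (Fin 8)) (p : Equiv.Perm (Fin 4)) : Prop :=
  ∀ i, g (lft i) = lft (p i) ∧ g (rgt i) = rgt (p i)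
/-- Product action with flip. -/
def Act1 (g : Equiv.Perm (Fin 8)) (p : Equiv.Perm (Fin 4)) : Prop :=
  ∀ i, g (lft i) = rgt (p i) ∧ g (rgt i) = lft (p i)

instance (g p) : Decidable (Act0 g p) := inferInstanceAs (Decidable (∀ _, _))
instance (g p) : Decidable (Act1 g p) := inferInstanceAs (Decidable (∀ _, _))

lemma GS_acts : ∀ g ∈ GS, ∃ p, Act0 g p ∨ Act1 g p := by
  rintro g (rfl | rfl | rfl | rfl | rfl)
  · exact ⟨Equiv.swap 0 1 * Equiv.swap 2 3, .inl (by decide)⟩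
  · exact ⟨Equiv.swap 0 2 * Equiv.swap 1 3, .inl (by decide)⟩
  · exact ⟨Equiv.swap 0 3 * Equiv.swap 1 2, .inr (by decide)⟩
  · exact ⟨Equiv.swap 1 2 * Equiv.swap 2 3, .inl (by decide)⟩
  · exact ⟨Equiv.swap 2 3, .inl (by decide)⟩

lemma exists_act0 (p : Equiv.Perm (Fin 4)) : ∃ g ∈ Subgroup.closure GS, Act0 g p := by
  have hp : p ∈ Submonoid.closure (Set.range fun i : Fin 3 ↦ Equiv.swap i.castSucc i.succ) := by
    rw [Equiv.Perm.mclosure_swap_castSucc_succ]; trivial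
  have m0 := Subgroup.subset_closure (k := GS) (.inl rfl)
  have m3 := Subgroup.subset_closure (k := GS) (.inr (.inr (.inr (.inl rfl))))
  have m4 := Subgroup.subset_closure (k := GS) (.inr (.inr (.inr (.inr rfl))))
  induction hp using Submonoid.closure_induction with
  | mem x hx =>
    obtain ⟨i, rfl⟩ := hx
    fin_cases i
    · exact ⟨_, mul_mem m0 m4, by decide⟩
    · exact ⟨_, mul_mem m3 m4, by decide⟩
    · exact ⟨_, m4, by decide⟩
  | one => exact ⟨1, one_mem _, fun i => ⟨rfl, rfl⟩⟩
  | mul x y _ _ hx hy =>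
    obtain ⟨g, hg, hg'⟩ := hx
    obtain ⟨h, hh, hh'⟩ := hy
    refine ⟨g * h, mul_mem hg hh, fun i => ?_⟩
    simp only [Equiv.Perm.mul_apply]
    rw [(hh' i).1, (hh' i).2]
    exact hg' _

lemma exists_act1 (p : Equiv.Perm (Fin 4)) : ∃ g ∈ Subgroup.closure GS, Act1 g p := by
  have m0 := Subgroup.subset_closure (k := GS) (.inl rfl)
  have m1 := Subgroup.subset_closure (k := GS) (.inr (.inl rfl))
  have m2 := Subgroup.subset_closure (k := GS) (.inr (.inr (.inl rfl)))
  obtain ⟨g, hg, hg'⟩ := exists_act0 p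
  have hex : ∃ c ∈ Subgroup.closure GS, Act1 c 1 :=
    ⟨_, mul_mem (mul_mem m0 m1) m2, by decide⟩
  obtain ⟨c, hcm, hc⟩ := hex
  refine ⟨c * g, mul_mem hcm hg, fun i => ?_⟩
  simp only [Equiv.Perm.mul_apply]
  rw [(hg' i).1, (hg' i).2]
  exact hc _

lemma act0_aa {g p} (h : Act0 g p) (i) : permHom K (Fin 8) g (aa K i) = aa K (p i) := by
  rw [aa, map_add, permHom_Xvar, permHom_Xvar, (h i).1, (h i).2, aa]

lemma act0_yy {g p} (h : Act0 g p) (i) : permHom K (Fin 8) g (yy K i) = yy K (p i) := by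
  rw [yy, permHom_Xvar, (h i).2, yy]

lemma act1_aa {g p} (h : Act1 g p) (i) : permHom K (Fin 8) g (aa K i) = aa K (p i) := by
  rw [aa, map_add, permHom_Xvar, permHom_Xvar, (h i).1, (h i).2, aa, add_comm]

lemma act1_yy {g p} (h : Act1 g p) (i) :
    permHom K (Fin 8) g (yy K i) = aa K (p i) - yy K (p i) := by
  rw [yy, permHom_Xvar, (h i).2, aa, yy, add_sub_cancel_right]

lemma Xlft (i) : Xvar K (Fin 8) (lft i) = aa K i - yy K i := by
  rw [aa, yy, add_sub_cancel_right]

lemma Xrgt (i) : Xvar K (Fin 8) (rgt i) = yy K i := rfl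

lemma succ_ne : ∀ i : Fin 4, i + 1 ≠ i := by decide

lemma rts_inj {w : Fin 4 → RFF K (Fin 8)}
    (hy : ∀ i, yy K i = ∑ j, w j * aa K i ^ (j : ℕ)) (hm : 2 * w 1 - 1 ≠ 0) :
    Function.Injective (rts (aa K) w) := by
  have key : ∀ i : Fin 4, ∃ f : RFF K (Fin 8) →ₐ[K] RFF K (Fin 8),
      f (w 1) = w 1 ∧ f (aa K i) ≠ aa K i := fun i => by
    obtain ⟨g, -, hg⟩ := exists_act0 (Equiv.swap i (i + 1))
    refine ⟨(permHom K (Fin 8) g).toAlgHom, ?_, ?_⟩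
    · exact hom_w1 (aa_inj K) hy (permHom K (Fin 8) g).toAlgHom _ (act0_aa K hg) (act0_yy K hg) 1
    · change permHom K (Fin 8) g (aa K i) ≠ _
      rw [act0_aa K hg, Equiv.swap_apply_left]
      intro h
      exact succ_ne i (aa_inj K h)
  have k1 : ∀ i, aa K i ≠ w 1 := fun i h => by
    obtain ⟨f, h1, h2⟩ := key i
    rw [h] at h2
    exact h2 h1
  have k2 : ∀ i, aa K i ≠ 1 - w 1 := fun i h => by
    obtain ⟨f, h1, h2⟩ := key i
    rw [h] at h2
    exact h2 (by rw [map_sub, map_one, h1])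
  have k3 : w 1 ≠ 1 - w 1 := fun h => hm (by linear_combination h)
  rw [rts]
  refine (aa_inj K).sumElim ?_ ?_
  · intro i j h
    fin_cases i <;> fin_cases j <;> simp_all
  · intro i j
    fin_cases j
    · exact k1 i
    · exact k2 i

lemma trdeg_eq : Algebra.trdeg K (RFF K (Fin 8)) = 8 := by
  have : Algebra.IsAlgebraic (MvPolynomial (Fin 8) K) (RFF K (Fin 8)) :=
    IsLocalization.isAlgebraic _ (nonZeroDivisors (MvPolynomial (Fin 8) K))
  have h := (IsTranscendenceBasis.mvPolynomial (Fin 8) K).algebraMap_comp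
    (A := RFF K (Fin 8))
  rw [← h.cardinalMk_eq_trdeg]
  simp

lemma isRat_of (M : IntermediateField K (RFF K (Fin 8))) (t : Fin 4 ⊕ Fin 4 → RFF K (Fin 8))
    (hM : M = IntermediateField.adjoin K (Set.range t))
    (halg : Algebra.IsAlgebraic (IntermediateField.adjoin K (Set.range t)) (RFF K (Fin 8))) :
    IsRatExt K M := by
  subst hM
  have halg' : Algebra.IsAlgebraic (Algebra.adjoin K (Set.range t)) (RFF K (Fin 8)) :=
    IntermediateField.isAlgebraic_adjoin_iff_top.mp halg
  have hb : IsTranscendenceBasis K t := by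
    apply Algebra.IsAlgebraic.isTranscendenceBasis_of_le_trdeg_of_finite
    rw [trdeg_eq]
    simp only [Cardinal.mk_fintype, Fintype.card_sum, Fintype.card_fin]
    norm_num
  set M := IntermediateField.adjoin K (Set.range t)
  let t0 : Fin 4 ⊕ Fin 4 → M :=
    fun s => ⟨t s, IntermediateField.subset_adjoin _ _ ⟨s, rfl⟩⟩
  have h0 : AlgebraicIndependent K t0 := AlgebraicIndependent.of_comp M.val hb.1
  refine ⟨8, t0 ∘ (finSumFinEquiv (m := 4) (n := 4)).symm, ?_, ?_⟩
  · exact h0.comp _ (Equiv.injective _)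
  · rw [Set.range_comp, Equiv.range_eq_univ, Set.image_univ]
    apply IntermediateField.lift_injective
    rw [IntermediateField.lift_adjoin, IntermediateField.lift_top, ← Set.range_comp]
    rfl

lemma main : IsRatExt K (fixedSub K (Fin 8) (Subgroup.closure GS)) := by
  obtain ⟨w, hy, hm⟩ := exists_w K
  have htop : IntermediateField.adjoin K (Set.range (aa K) ∪ Set.range (yy K)) = ⊤ := by
    apply adjoin_Xvar
    intro k
    have ha : ∀ i, aa K i ∈ IntermediateField.adjoin K (Set.range (aa K) ∪ Set.range (yy K)) :=
      fun i => IntermediateField.subset_adjoin _ _ (.inl ⟨i, rfl⟩)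
    have hy : ∀ i, yy K i ∈ IntermediateField.adjoin K (Set.range (aa K) ∪ Set.range (yy K)) :=
      fun i => IntermediateField.subset_adjoin _ _ (.inr ⟨i, rfl⟩)
    rcases lft_or_rgt k with ⟨i, rfl⟩ | ⟨i, rfl⟩
    · rw [Xlft]; exact sub_mem (ha i) (hy i)
    · exact hy i
  obtain ⟨hgal, hfin⟩ := isGalois_FF (K := K) hm (rts_inj K hy hm) hy htop
  refine isRat_of K _ (gens (aa K) w) (le_antisymm ?_ ?_) inferInstance
  · intro z hz
    have hz' : ∀ g ∈ Subgroup.closure GS, permHom K (Fin 8) g z = z := fun g hg =>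
      (IntermediateField.mem_fixedField_iff _ _).mp hz _ ⟨g, hg, rfl⟩
    suffices z ∈ (⊥ : IntermediateField (FF K (aa K) w) (RFF K (Fin 8))) by
      obtain ⟨u, rfl⟩ := IntermediateField.mem_bot.mp this
      exact u.2
    rw [IsGalois.mem_bot_iff_fixed]
    intro f
    obtain ⟨p, hpa, hpy⟩ := gal_acts (K := K) hm (aa_inj K) hy f
    obtain ⟨g, hg, hgf⟩ : ∃ g ∈ Subgroup.closure GS, ∀ k,
        f (Xvar K (Fin 8) k) = permHom K (Fin 8) g (Xvar K (Fin 8) k) := by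
      rcases hpy with hpy | hpy
      · obtain ⟨g, hg, h⟩ := exists_act0 p
        refine ⟨g, hg, fun k => ?_⟩
        rcases lft_or_rgt k with ⟨i, rfl⟩ | ⟨i, rfl⟩
        · rw [Xlft, map_sub, map_sub, act0_aa K h, act0_yy K h, hpa, hpy]
        · rw [Xrgt, act0_yy K h, hpy]
      · obtain ⟨g, hg, h⟩ := exists_act1 p
        refine ⟨g, hg, fun k => ?_⟩
        rcases lft_or_rgt k with ⟨i, rfl⟩ | ⟨i, rfl⟩
        · rw [Xlft, map_sub, map_sub, act1_aa K h, act1_yy K h, hpa, hpy]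
        · rw [Xrgt, act1_yy K h, hpy]
    have := hom_ext_Xvar K (f := (f.restrictScalars K).toAlgHom)
      (g := (permHom K (Fin 8) g).toAlgHom) hgf z
    exact this.trans (hz' g hg)
  · rw [IntermediateField.adjoin_le_iff]
    rintro _ ⟨s, rfl⟩
    refine (IntermediateField.mem_fixedField_iff _ _).mpr ?_
    rintro _ ⟨g, hg, rfl⟩
    induction hg using Subgroup.closure_induction with
    | mem g hg =>
      obtain ⟨p, h | h⟩ := GS_acts g hg
      · exact (hom_fixes (aa_inj K) hy (permHom K (Fin 8) g).toAlgHom p (act0_aa K h)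
          (.inl (act0_yy K h))).2 s
      · exact (hom_fixes (aa_inj K) hy (permHom K (Fin 8) g).toAlgHom p (act1_aa K h)
          (.inr (act1_yy K h))).2 s
    | one => rw [map_one]; rfl
    | mul x y _ _ hx hy => rw [map_mul, AlgEquiv.mul_apply, hy, hx]
    | inv x _ hx =>
      rw [map_inv]
      conv_lhs => rw [← hx]
      exact AlgEquiv.symm_apply_apply _ _

end concrete
end G24

/-- **Rationality for `G₂₄`.** For any field `K`, the subgroup `G₂₄ ⊆ S₈` of order 48 generated by `σ₁`, `σ₂`, `κ`, `φ₁ = (2,3,4)(7,6,5)` and `φ̃₂ = (3,4)(5,6)` has `K`-rational fixed field. -/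
theorem rationality_G24 (K : Type) [Field K] :
    IsRatExt K ↥(fixedSub K (Fin 8) (Subgroup.closure
      {Equiv.swap (0 : Fin 8) 1 * Equiv.swap 2 3 * Equiv.swap 4 5 * Equiv.swap 6 7,
       Equiv.swap (0 : Fin 8) 2 * Equiv.swap 1 3 * Equiv.swap 4 6 * Equiv.swap 5 7,
       Equiv.swap (0 : Fin 8) 4 * Equiv.swap 1 5 * Equiv.swap 2 6 * Equiv.swap 3 7,
       (Equiv.swap (1 : Fin 8) 2 * Equiv.swap 2 3) * (Equiv.swap (6 : Fin 8) 5 * Equiv.swap 5 4),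
       Equiv.swap (2 : Fin 8) 3 * Equiv.swap 4 5})) := by
  exact G24.main K
end
end
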